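/- arXiv:2502.20215 — 5 statements merged into one kernel-verified Lean document; each statement's English description precedes it below -/
import Mathlib

section
/- Let E be the Euclidean plane (EuclideanSpace ℝ (Fin 2)). Let a, b, p, q ∈ E with a ≠ p, a ≠ q, b ≠ p, b ≠ q, and suppose some point x lies in the open segment between a and b and also in the open segment between p and q. Then at least one of the following holds: p ∈ lens(a,b), or q ∈ lens(a,b), or a ∈ lens(p,q), or b ∈ lens(p,q). Equivalently, two edges whose lenses each contain none of the other edge's endpoints cannot cross. -/
/-!
By Apollonius's theorem, twice the power of `z` with respect to the sphere with diameter `a b` is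
`|za|² + |zb|² - |ab|²`, so the closed ball with diameter `a b`, minus the points `a` and `b`, lies
in the lens of `a` and `b`. The difference of the powers of a point with respect to two spheres is
an affine function of the point. If no endpoint lies in the opposite lens, then the affine function
`power_ab - power_pq` is nonnegative at `p` and `q`, hence at the crossing point, and by symmetry
nonpositive there. So it vanishes at all four endpoints, and the two segments have the same
endpoints.
-/

open AffineMap EuclideanGeometry Metric

/-- The lens of the pair `u`, `v`, the region that an edge `u v` of a relative neighborhood graph
keeps free of other points. It is encoded as an intersection of open balls and is empty for
`u = v`. -/
def lens {M : Type*} [PseudoMetricSpace M] (u v : M) : Set M :=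
  ball u (dist u v) ∩ ball v (dist u v)

section SpherePower

variable {V P : Type*} [NormedAddCommGroup V] [InnerProductSpace ℝ V] [MetricSpace P]
  [NormedAddTorsor V P] {a b z : P}

theorem two_mul_power_ofDiameter (a b z : P) :
    2 * (Sphere.ofDiameter a b).power z = dist z a ^ 2 + dist z b ^ 2 - dist a b ^ 2 := by
  rw [dist_sq_add_dist_sq_eq_two_mul_dist_midpoint_sq_add_half_dist_sq, Sphere.power,
    Sphere.ofDiameter]
  ring

theorem power_ofDiameter_left (a b : P) : (Sphere.ofDiameter a b).power a = 0 := by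
  simpa using two_mul_power_ofDiameter a b a

theorem power_ofDiameter_right (a b : P) : (Sphere.ofDiameter a b).power b = 0 := by
  simpa [dist_comm b a] using two_mul_power_ofDiameter a b b

theorem mem_lens_of_power_ofDiameter_nonpos (hza : z ≠ a) (hzb : z ≠ b)
    (h : (Sphere.ofDiameter a b).power z ≤ 0) : z ∈ lens a b := by
  have h_sq : dist z a ^ 2 + dist z b ^ 2 ≤ dist a b ^ 2 := by
    linarith [two_mul_power_ofDiameter a b z]
  have ha_pos : 0 < dist z a ^ 2 := pow_pos (dist_pos.2 hza) 2
  have hb_pos : 0 < dist z b ^ 2 := pow_pos (dist_pos.2 hzb) 2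
  exact ⟨lt_of_pow_lt_pow_left₀ 2 dist_nonneg (by linarith),
    lt_of_pow_lt_pow_left₀ 2 dist_nonneg (by linarith)⟩

theorem eq_or_eq_of_power_ofDiameter_nonpos (hz : z ∉ lens a b)
    (h : (Sphere.ofDiameter a b).power z ≤ 0) : z = a ∨ z = b := by
  by_contra! hne
  exact hz (mem_lens_of_power_ofDiameter_nonpos hne.1 hne.2 h)

theorem power_ofDiameter_nonneg_of_notMem_lens (hz : z ∉ lens a b) :
    0 ≤ (Sphere.ofDiameter a b).power z := by
  by_contra! h
  obtain rfl | rfl := eq_or_eq_of_power_ofDiameter_nonpos hz h.le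
  · exact h.ne (power_ofDiameter_left z b)
  · exact h.ne (power_ofDiameter_right a z)

/-- Stewart's theorem, with apex the center of `s`. -/
theorem power_lineMap (s : Sphere P) (p q : P) (r : ℝ) :
    s.power (lineMap p q r) =
      (1 - r) * s.power p + r * s.power q - r * (1 - r) * dist p q ^ 2 := by
  have h_line : lineMap p q r -ᵥ s.center =
      (p -ᵥ s.center) + r • ((q -ᵥ s.center) - (p -ᵥ s.center)) := by
    rw [lineMap_apply, vadd_vsub_assoc, vsub_sub_vsub_cancel_right, add_comm]
  have h_dist : dist p q = ‖(q -ᵥ s.center) - (p -ᵥ s.center)‖ := by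
    rw [vsub_sub_vsub_cancel_right, dist_comm, dist_eq_norm_vsub V]
  simp only [Sphere.power, h_dist, dist_eq_norm_vsub V _ s.center, h_line, norm_add_sq_real,
    norm_sub_sq_real, norm_smul, mul_pow, Real.norm_eq_abs, sq_abs, inner_smul_right,
    inner_sub_right, real_inner_self_eq_norm_sq, real_inner_comm (p -ᵥ s.center)]
  ring

theorem power_lineMap_sub_power_ofDiameter (s : Sphere P) (p q : P) (r : ℝ) :
    s.power (lineMap p q r) - (Sphere.ofDiameter p q).power (lineMap p q r) =
      (1 - r) * s.power p + r * s.power q := by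
  rw [power_lineMap s, power_lineMap (Sphere.ofDiameter p q), power_ofDiameter_left,
    power_ofDiameter_right]
  ring

end SpherePower

section Crossing

variable {V : Type*} [NormedAddCommGroup V] [InnerProductSpace ℝ V] {s : Sphere V} {p q x : V}

theorem power_ofDiameter_le_power_of_mem_openSegment (hx : x ∈ openSegment ℝ p q)
    (hp : 0 ≤ s.power p) (hq : 0 ≤ s.power q) :
    (Sphere.ofDiameter p q).power x ≤ s.power x := by
  rw [openSegment_eq_image_lineMap] at hx
  obtain ⟨r, ⟨hr₀, hr₁⟩, rfl⟩ := hx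
  rw [← sub_nonneg, power_lineMap_sub_power_ofDiameter]
  exact add_nonneg (mul_nonneg (sub_nonneg.2 hr₁.le) hp) (mul_nonneg hr₀.le hq)

theorem power_eq_zero_of_power_le_power_ofDiameter (hx : x ∈ openSegment ℝ p q)
    (hp : 0 ≤ s.power p) (hq : 0 ≤ s.power q)
    (h : s.power x ≤ (Sphere.ofDiameter p q).power x) :
    s.power p = 0 ∧ s.power q = 0 := by
  rw [openSegment_eq_image_lineMap] at hx
  obtain ⟨r, ⟨hr₀, hr₁⟩, rfl⟩ := hx
  rw [← sub_nonpos, power_lineMap_sub_power_ofDiameter] at h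
  have hp_term : 0 ≤ (1 - r) * s.power p := mul_nonneg (sub_nonneg.2 hr₁.le) hp
  have hq_term : 0 ≤ r * s.power q := mul_nonneg hr₀.le hq
  obtain ⟨hp_zero, hq_zero⟩ := (add_eq_zero_iff_of_nonneg hp_term hq_term).1
    (h.antisymm (add_nonneg hp_term hq_term))
  exact ⟨(mul_eq_zero.1 hp_zero).resolve_left (sub_pos.2 hr₁).ne',
    (mul_eq_zero.1 hq_zero).resolve_left hr₀.ne'⟩

theorem endpoints_eq_or_eq_of_power_ofDiameter_le {a b : V} (hx : x ∈ openSegment ℝ p q)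
    (hp : p ∉ lens a b) (hq : q ∉ lens a b)
    (h : (Sphere.ofDiameter a b).power x ≤ (Sphere.ofDiameter p q).power x) :
    (p = a ∨ p = b) ∧ (q = a ∨ q = b) := by
  have h_zero := power_eq_zero_of_power_le_power_ofDiameter hx
    (power_ofDiameter_nonneg_of_notMem_lens hp) (power_ofDiameter_nonneg_of_notMem_lens hq) h
  exact ⟨eq_or_eq_of_power_ofDiameter_nonpos hp h_zero.1.le,
    eq_or_eq_of_power_ofDiameter_nonpos hq h_zero.2.le⟩

theorem crossing_edges_lens_general {a b : V} (hne : s(a, b) ≠ s(p, q))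
    (hx_ab : x ∈ openSegment ℝ a b) (hx_pq : x ∈ openSegment ℝ p q) :
    p ∈ lens a b ∨ q ∈ lens a b ∨ a ∈ lens p q ∨ b ∈ lens p q := by
  by_contra! ⟨hp, hq, ha, hb⟩
  have h_le : (Sphere.ofDiameter p q).power x ≤ (Sphere.ofDiameter a b).power x :=
    power_ofDiameter_le_power_of_mem_openSegment hx_pq
      (power_ofDiameter_nonneg_of_notMem_lens hp) (power_ofDiameter_nonneg_of_notMem_lens hq)
  have h_ge : (Sphere.ofDiameter a b).power x ≤ (Sphere.ofDiameter p q).power x :=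
    power_ofDiameter_le_power_of_mem_openSegment hx_ab
      (power_ofDiameter_nonneg_of_notMem_lens ha) (power_ofDiameter_nonneg_of_notMem_lens hb)
  have h_pq : (p = a ∨ p = b) ∧ (q = a ∨ q = b) :=
    endpoints_eq_or_eq_of_power_ofDiameter_le hx_pq hp hq h_ge
  have h_ab : (a = p ∨ a = q) ∧ (b = p ∨ b = q) :=
    endpoints_eq_or_eq_of_power_ofDiameter_le hx_ab ha hb h_le
  exact hne (by grind)

end Crossing

/-- Two crossing edges in the plane cannot both have lenses avoiding the
other edge's endpoints: if `x` lies on the open segments `ab` and `pq`,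
then `p ∈ lens(a,b)`, or `q ∈ lens(a,b)`, or `a ∈ lens(p,q)`, or
`b ∈ lens(p,q)`. -/
theorem crossing_edges_lens
    (a b p q : EuclideanSpace ℝ (Fin 2))
    (hap : a ≠ p) (haq : a ≠ q) (hbp : b ≠ p) (hbq : b ≠ q)
    (x : EuclideanSpace ℝ (Fin 2))
    (hx_ab : x ∈ openSegment ℝ a b)
    (hx_pq : x ∈ openSegment ℝ p q) :
    (dist p a < dist a b ∧ dist p b < dist a b) ∨
    (dist q a < dist a b ∧ dist q b < dist a b) ∨
    (dist a p < dist p q ∧ dist a q < dist p q) ∨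
    (dist b p < dist p q ∧ dist b q < dist p q) := by
  exact crossing_edges_lens_general (by simp [hap, haq]) hx_ab hx_pq
end

section
/- Let E be the Euclidean plane (EuclideanSpace ℝ (Fin 2)) and let a, b ∈ E with a ≠ b; write d = dist a b. Let u, v ∈ E satisfy dist u a < d, dist u b < d, dist v a < d, dist v b < d (i.e., u, v ∈ lens(a,b)), and suppose u and v lie weakly on the same side of the affine line through a and b (AffineSubspace.WSameSide of the affine span of {a,b}). Then dist u v < d. -/
/-!
Order the two points so that `v` is at most as far from the line as `u`, and let `q` be the foot of
the perpendicular from `v`. As `v` is on the same side as `u` and no higher, replacing it by `q`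
does not lower the distance to `u`. Membership of `v` in the lens puts `q` on the segment `[a, b]`,
so by convexity of the distance to `u`, one of the endpoints is at least as far from `u` as `q` is.
-/

open EuclideanGeometry

section NormedSpace

variable {V P : Type*} [NormedAddCommGroup V] [NormedSpace ℝ V] [MetricSpace P]
  [NormedAddTorsor V P]

theorem wbtw_of_mem_affineSpan_pair_of_dist_le {a b p : P} (hp : p ∈ line[ℝ, a, b])
    (hpa : dist p a ≤ dist a b) (hpb : dist p b ≤ dist a b) : Wbtw ℝ a p b := by
  obtain ⟨r, rfl⟩ := mem_affineSpan_pair_iff_exists_lineMap_eq.1 hp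
  rcases eq_or_ne a b with rfl | hab
  · simp
  have hd : 0 < dist a b := dist_pos.2 hab
  rw [dist_lineMap_left, Real.norm_eq_abs, mul_le_iff_le_one_left hd] at hpa
  rw [dist_lineMap_right, Real.norm_eq_abs, mul_le_iff_le_one_left hd] at hpb
  exact wbtw_lineMap_iff.2 (.inr ⟨by linarith [le_of_abs_le hpb], le_of_abs_le hpa⟩)

end NormedSpace

section RCLike

variable {𝕜 V P : Type*} [RCLike 𝕜] [NormedAddCommGroup V] [InnerProductSpace 𝕜 V] [MetricSpace P]
  [NormedAddTorsor V P]

theorem norm_add_le_norm_add_of_inner_eq_zero {x y z : V} (hxy : inner 𝕜 x y = 0)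
    (hxz : inner 𝕜 x z = 0) (h : ‖y‖ ≤ ‖z‖) : ‖x + y‖ ≤ ‖x + z‖ := by
  rw [← sq_le_sq₀ (norm_nonneg _) (norm_nonneg _), norm_add_sq (𝕜 := 𝕜), norm_add_sq (𝕜 := 𝕜),
    hxy, hxz]
  gcongr

variable {s : AffineSubspace 𝕜 P} [Nonempty s] [s.direction.HasOrthogonalProjection]

theorem dist_orthogonalProjection_le_dist {p : P} (x : P) (hp : p ∈ s) :
    dist (orthogonalProjection s x : P) p ≤ dist x p := by
  rw [dist_comm, dist_comm x, mul_self_le_mul_self_iff dist_nonneg dist_nonneg,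
    dist_sq_eq_dist_orthogonalProjection_sq_add_dist_orthogonalProjection_sq x hp]
  exact le_add_of_nonneg_right (mul_self_nonneg _)

theorem starProjection_orthogonal_direction_vsub {p : P} (x : P) (hp : p ∈ s) :
    s.directionᗮ.starProjection (x -ᵥ p) = x -ᵥ (orthogonalProjection s x : P) := by
  refine Submodule.eq_starProjection_of_mem_orthogonal
    (vsub_orthogonalProjection_mem_direction_orthogonal s x) ?_
  rw [vsub_sub_vsub_cancel_left]
  exact s.direction.le_orthogonal_orthogonal
    (AffineSubspace.vsub_mem_direction (orthogonalProjection_mem x) hp)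

end RCLike

section Real

variable {V P : Type*} [NormedAddCommGroup V] [InnerProductSpace ℝ V] [MetricSpace P]
  [NormedAddTorsor V P]

section AffineSubspace

variable {s : AffineSubspace ℝ P} [Nonempty s] [s.direction.HasOrthogonalProjection]

theorem sameRay_vsub_orthogonalProjection_of_wSameSide {u v : P} (h : s.WSameSide u v) :
    SameRay ℝ (u -ᵥ (orthogonalProjection s u : P)) (v -ᵥ (orthogonalProjection s v : P)) := by
  obtain ⟨p, hp, q, hq, hray⟩ := h
  rw [← starProjection_orthogonal_direction_vsub u hp,
    ← starProjection_orthogonal_direction_vsub v hq]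
  exact hray.map s.directionᗮ.starProjection.toLinearMap

theorem dist_le_dist_orthogonalProjection_of_wSameSide {u v : P} (h : s.WSameSide u v)
    (hvu : dist v (orthogonalProjection s v) ≤ dist u (orthogonalProjection s u)) :
    dist u v ≤ dist u (orthogonalProjection s v) := by
  set u' : P := ↑(orthogonalProjection s u)
  set v' : P := ↑(orthogonalProjection s v)
  have hu : u -ᵥ u' ∈ s.directionᗮ := vsub_orthogonalProjection_mem_direction_orthogonal s u
  have hv : v -ᵥ v' ∈ s.directionᗮ := vsub_orthogonalProjection_mem_direction_orthogonal s v
  have huv' : u' -ᵥ v' ∈ s.direction :=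
    AffineSubspace.vsub_mem_direction (orthogonalProjection_mem u) (orthogonalProjection_mem v)
  have hheight : ‖(u -ᵥ u') - (v -ᵥ v')‖ ≤ ‖u -ᵥ u'‖ := by
    rw [dist_eq_norm_vsub V, dist_eq_norm_vsub V] at hvu
    rw [(sameRay_vsub_orthogonalProjection_of_wSameSide h).norm_sub,
      abs_of_nonneg (sub_nonneg.2 hvu)]
    exact sub_le_self _ (norm_nonneg _)
  calc
    dist u v = ‖(u' -ᵥ v') + ((u -ᵥ u') - (v -ᵥ v'))‖ := by
      rw [dist_eq_norm_vsub V, add_sub, add_comm, vsub_add_vsub_cancel, vsub_sub_vsub_cancel_right]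
    _ ≤ ‖(u' -ᵥ v') + (u -ᵥ u')‖ := norm_add_le_norm_add_of_inner_eq_zero
      (s.direction.inner_right_of_mem_orthogonal huv' (sub_mem hu hv))
      (s.direction.inner_right_of_mem_orthogonal huv' hu) hheight
    _ = dist u v' := by rw [add_comm, vsub_add_vsub_cancel, dist_eq_norm_vsub V]

end AffineSubspace

variable {a b u v : P}

theorem wbtw_orthogonalProjection_of_dist_le (hva : dist v a ≤ dist a b)
    (hvb : dist v b ≤ dist a b) : Wbtw ℝ a (orthogonalProjection line[ℝ, a, b] v) b :=
  wbtw_of_mem_affineSpan_pair_of_dist_le (orthogonalProjection_mem v)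
    ((dist_orthogonalProjection_le_dist v (left_mem_affineSpan_pair ℝ a b)).trans hva)
    ((dist_orthogonalProjection_le_dist v (right_mem_affineSpan_pair ℝ a b)).trans hvb)

theorem dist_le_max_dist_of_wSameSide (hva : dist v a ≤ dist a b) (hvb : dist v b ≤ dist a b)
    (hside : line[ℝ, a, b].WSameSide u v)
    (hvu : dist v (orthogonalProjection line[ℝ, a, b] v) ≤
      dist u (orthogonalProjection line[ℝ, a, b] u)) :
    dist u v ≤ max (dist u a) (dist u b) :=
  calc
    dist u v ≤ dist u (orthogonalProjection line[ℝ, a, b] v) :=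
      dist_le_dist_orthogonalProjection_of_wSameSide hside hvu
    _ ≤ max (dist u a) (dist u b) := by
      simpa only [dist_comm u] using
        (wbtw_orthogonalProjection_of_dist_le hva hvb).dist_le_max_dist u

theorem same_half_lens_general (hua : dist u a < dist a b) (hub : dist u b < dist a b)
    (hva : dist v a < dist a b) (hvb : dist v b < dist a b)
    (hside : line[ℝ, a, b].WSameSide u v) : dist u v < dist a b := by
  rcases le_total (dist v (orthogonalProjection line[ℝ, a, b] v))
    (dist u (orthogonalProjection line[ℝ, a, b] u)) with hvu | huv
  · exact (dist_le_max_dist_of_wSameSide hva.le hvb.le hside hvu).trans_lt (max_lt hua hub)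
  · rw [dist_comm u v]
    exact (dist_le_max_dist_of_wSameSide hua.le hub.le hside.symm huv).trans_lt (max_lt hva hvb)

end Real

/-- Same half-lens lemma: two points of the open lens of `(a,b)` lying
weakly on the same side of the line through `a` and `b` are at distance
less than `dist a b`. -/
theorem same_half_lens
    (a b u v : EuclideanSpace ℝ (Fin 2)) (hab : a ≠ b)
    (hua : dist u a < dist a b) (hub : dist u b < dist a b)
    (hva : dist v a < dist a b) (hvb : dist v b < dist a b)
    (hside : AffineSubspace.WSameSide
      (affineSpan ℝ ({a, b} : Set (EuclideanSpace ℝ (Fin 2)))) u v) :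
    dist u v < dist a b :=
  same_half_lens_general hua hub hva hvb hside
end

section
/- Let E be the Euclidean plane (EuclideanSpace ℝ (Fin 2)). Let A, B, C, c ∈ E and r ≥ 0 be such that c lies in the convex hull of {A, B, C} and dist c A ≥ r, dist c B ≥ r, dist c C ≥ r. Then the longest side of the triangle is at least √3·r, i.e. max (dist A B) (max (dist A C) (dist B C)) ≥ √3 · r. -/
/-!
Write the center as a convex combination `c = ∑ wᵢ pᵢ` of the `n + 1` vertices. Expanding squares,
`∑ wᵢ |c - pᵢ|² = ½ ∑ᵢ ∑ⱼ wᵢ wⱼ |pᵢ - pⱼ|²`. The diagonal terms on the right vanish, so it is at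
most `½ (1 - ∑ wᵢ²) d²`, where `d` is the diameter of the set of vertices, and
`∑ wᵢ² ≥ 1 / (n + 1)` by Cauchy–Schwarz. Hence some vertex satisfies
`|c - pᵢ|² ≤ n / (2 (n + 1)) d²`, as in Jung's theorem; for a triangle, `n = 2` and the constant
is `1 / 3`.
-/

open Finset Metric

theorem exists_le_of_sum_mul_le {ι R : Type*} [Semiring R] [LinearOrder R] [IsStrictOrderedRing R]
    {s : Finset ι} {w f : ι → R} {a : R} (hw_nonneg : ∀ i ∈ s, 0 ≤ w i)
    (hw_sum : ∑ i ∈ s, w i = 1) (hf : ∑ i ∈ s, w i * f i ≤ a) :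
    ∃ i ∈ s, f i ≤ a := by
  by_contra! hlt
  obtain ⟨k, hk, hwk⟩ : ∃ k ∈ s, 0 < w k := exists_lt_of_sum_lt (by simp [hw_sum])
  refine hf.not_gt ?_
  calc a = ∑ i ∈ s, w i * a := by rw [← sum_mul, hw_sum, one_mul]
    _ < ∑ i ∈ s, w i * f i :=
        sum_lt_sum (fun i hi ↦ mul_le_mul_of_nonneg_left (hlt i hi).le (hw_nonneg i hi))
          ⟨k, hk, mul_lt_mul_of_pos_left (hlt k hk) hwk⟩

theorem sum_sum_mul_dist_sq_le {ι X : Type*} [PseudoMetricSpace X] {s : Finset ι} {w : ι → ℝ}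
    {p : ι → X} {d : ℝ} (hw : ∀ i ∈ s, 0 ≤ w i) (hd : ∀ i ∈ s, ∀ j ∈ s, dist (p i) (p j) ≤ d) :
    ∑ i ∈ s, ∑ j ∈ s, w i * w j * dist (p i) (p j) ^ 2 ≤
      ((∑ i ∈ s, w i) ^ 2 - ∑ i ∈ s, w i ^ 2) * d ^ 2 := by
  classical
  have off_diagonal : ∀ i ∈ s, ∀ j ∈ s, w i * w j * dist (p i) (p j) ^ 2 ≤
      (w i * w j - if i = j then w i ^ 2 else 0) * d ^ 2 := by
    intro i hi j hj
    split_ifs with hij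
    · simp [hij, sq]
    · rw [sub_zero]
      have := mul_nonneg (hw i hi) (hw j hj)
      gcongr
      exact hd i hi j hj
  calc ∑ i ∈ s, ∑ j ∈ s, w i * w j * dist (p i) (p j) ^ 2
      ≤ ∑ i ∈ s, ∑ j ∈ s, (w i * w j - if i = j then w i ^ 2 else 0) * d ^ 2 :=
        sum_le_sum fun i hi ↦ sum_le_sum fun j hj ↦ off_diagonal i hi j hj
    _ = ((∑ i ∈ s, w i) ^ 2 - ∑ i ∈ s, w i ^ 2) * d ^ 2 := by
        simp +contextual only [← sum_mul, sum_sub_distrib, sum_ite_eq, if_true, sq (∑ i ∈ s, w i),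
          sum_mul_sum]

section InnerProductSpace

variable {ι V : Type*} [SeminormedAddCommGroup V] [InnerProductSpace ℝ V]

theorem sum_sum_mul_norm_sub_sq (s : Finset ι) (w : ι → ℝ) (v : ι → V) :
    ∑ i ∈ s, ∑ j ∈ s, w i * w j * ‖v i - v j‖ ^ 2 =
      2 * ((∑ i ∈ s, w i) * ∑ i ∈ s, w i * ‖v i‖ ^ 2 - ‖∑ i ∈ s, w i • v i‖ ^ 2) := by
  have norm_sum_sq :
      ‖∑ i ∈ s, w i • v i‖ ^ 2 = ∑ i ∈ s, ∑ j ∈ s, w i * w j * inner ℝ (v i) (v j) := by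
    rw [← real_inner_self_eq_norm_sq, sum_inner]
    simp only [inner_sum, real_inner_smul_left, real_inner_smul_right, mul_assoc, mul_left_comm]
  have expand (i j : ι) : w i * w j * ‖v i - v j‖ ^ 2 =
      w i * ‖v i‖ ^ 2 * w j + w i * (w j * ‖v j‖ ^ 2) - 2 * (w i * w j * inner ℝ (v i) (v j)) := by
    rw [norm_sub_sq_real]
    ring
  simp only [expand, sum_sub_distrib, sum_add_distrib, ← mul_sum, ← sum_mul, norm_sum_sq]
  ring

theorem sum_mul_dist_sum_smul_sq {s : Finset ι} {w : ι → ℝ} (hw : ∑ i ∈ s, w i = 1) (p : ι → V) :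
    ∑ i ∈ s, w i * dist (∑ j ∈ s, w j • p j) (p i) ^ 2 =
      (∑ i ∈ s, ∑ j ∈ s, w i * w j * dist (p i) (p j) ^ 2) / 2 := by
  set c := ∑ j ∈ s, w j • p j with hc
  have centered : ∑ i ∈ s, w i • (p i - c) = 0 := by
    simp only [smul_sub, sum_sub_distrib, ← sum_smul, hw, one_smul, ← hc, sub_self]
  have moment_identity := sum_sum_mul_norm_sub_sq s w fun i ↦ p i - c
  simp only [sub_sub_sub_cancel_right, hw, centered, norm_zero] at moment_identity
  simp only [dist_comm c, dist_eq_norm, moment_identity]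
  ring

theorem exists_dist_sq_le_diam_sq_of_mem_convexHull {s : Finset V} {n : ℕ} (hs : #s ≤ n + 1)
    {c : V} (hc : c ∈ convexHull ℝ (s : Set V)) :
    ∃ x ∈ s, dist c x ^ 2 ≤ n / (2 * (n + 1)) * diam (s : Set V) ^ 2 := by
  obtain ⟨w, hw_nonneg, hw_sum, rfl⟩ := mem_convexHull'.1 hc
  set c := ∑ y ∈ s, w y • y
  set d := diam (s : Set V)
  have hd : ∀ x ∈ s, ∀ y ∈ s, dist x y ≤ d := fun x hx y hy ↦
    dist_le_diam_of_mem s.finite_toSet.isBounded hx hy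
  have sum_sq_ge : 1 / (n + 1) ≤ ∑ x ∈ s, w x ^ 2 := by
    rw [div_le_iff₀' (by positivity)]
    calc (1 : ℝ) = (∑ x ∈ s, w x) ^ 2 := by rw [hw_sum, one_pow]
      _ ≤ #s * ∑ x ∈ s, w x ^ 2 := sq_sum_le_card_mul_sum_sq
      _ ≤ (n + 1) * ∑ x ∈ s, w x ^ 2 := by gcongr; exact_mod_cast hs
  have mean_le : ∑ x ∈ s, w x * dist c x ^ 2 ≤ n / (2 * (n + 1)) * d ^ 2 :=
    calc ∑ x ∈ s, w x * dist c x ^ 2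
        = (∑ x ∈ s, ∑ y ∈ s, w x * w y * dist x y ^ 2) / 2 :=
          sum_mul_dist_sum_smul_sq hw_sum id
      _ ≤ (1 - ∑ x ∈ s, w x ^ 2) * d ^ 2 / 2 := by
          have := sum_sum_mul_dist_sq_le (p := id) hw_nonneg hd
          rw [hw_sum, one_pow] at this
          exact div_le_div_of_nonneg_right this zero_le_two
      _ ≤ (1 - 1 / (n + 1)) * d ^ 2 / 2 := by gcongr
      _ = n / (2 * (n + 1)) * d ^ 2 := by field_simp; ring
  exact exists_le_of_sum_mul_le hw_nonneg hw_sum mean_le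

theorem triangle_containing_center_longest_side_general {A B C c : V} {r : ℝ}
    (hc : c ∈ convexHull ℝ {A, B, C})
    (hA : r ≤ dist c A) (hB : r ≤ dist c B) (hC : r ≤ dist c C) :
    √3 * r ≤ max (dist A B) (max (dist A C) (dist B C)) := by
  classical
  rw [← max_assoc, ← diam_triple]
  obtain ⟨x, hx, hcx⟩ := exists_dist_sq_le_diam_sq_of_mem_convexHull (s := {A, B, C}) (n := 2)
    card_le_three (by simpa using hc)
  have hrx : r ≤ dist c x := by
    simp only [mem_insert, mem_singleton] at hx
    rcases hx with rfl | rfl | rfl <;> assumption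
  push_cast at hcx
  calc √3 * r ≤ √3 * dist c x := by gcongr
    _ ≤ diam {A, B, C} := by
      refine le_of_sq_le_sq ?_ diam_nonneg
      rw [mul_pow, Real.sq_sqrt zero_le_three]
      linarith

end InnerProductSpace

/-- A triangle containing the center of a disk of radius `r` with no vertex
strictly inside the disk has longest side at least `√3 · r`. -/
theorem triangle_containing_center_longest_side
    (A B C c : EuclideanSpace ℝ (Fin 2)) (r : ℝ) (hr : 0 ≤ r)
    (hc : c ∈ convexHull ℝ ({A, B, C} : Set (EuclideanSpace ℝ (Fin 2))))
    (hA : dist c A ≥ r) (hB : dist c B ≥ r) (hC : dist c C ≥ r) :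
    max (dist A B) (max (dist A C) (dist B C)) ≥ Real.sqrt 3 * r :=
  triangle_containing_center_longest_side_general hc hA hB hC
end

section
/- Let E be the Euclidean plane (EuclideanSpace ℝ (Fin 2)). Let a, c, p, q ∈ E and suppose some point x lies in the open segment between a and c and also in the open segment between p and q, that a, p, q are not collinear, and that dist p q ≤ dist a p. Then dist c q < dist a c. -/
/-!
If the segments `ac` and `pq` cross at `x`, they split as `|ac| = |ax| + |xc|` and
`|pq| = |px| + |xq|`. The triangle inequality for `c, x, q`, together with the one for `a, x, p`,
which is strict because `a` is off the line `pq`, gives `|cq| + |ap| < |ac| + |pq|`, and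
`|pq| ≤ |ap|` cancels.
-/

theorem sbtw_of_mem_openSegment {k E : Type*} [Field k] [LinearOrder k] [IsStrictOrderedRing k]
    [AddCommGroup E] [Module k E] {p q x : E} (hx : x ∈ openSegment k p q) (hpq : p ≠ q) :
    Sbtw k p x q := by
  refine ⟨mem_segment_iff_wbtw.1 (openSegment_subset_segment k p q hx), ?_, ?_⟩
  · rintro rfl
    exact hpq (left_mem_openSegment_iff.1 hx)
  · rintro rfl
    exact hpq (right_mem_openSegment_iff.1 hx)

theorem not_collinear_of_mem_affineSpan_pair {k V P : Type*} [DivisionRing k] [AddCommGroup V]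
    [Module k V] [AddTorsor V P] {a p q x : P} (hx : x ∈ line[k, p, q]) (hpx : p ≠ x)
    (hcol : ¬ Collinear k {a, p, q}) :
    ¬ Collinear k {a, x, p} := by
  intro haxp
  have ha : a ∈ line[k, p, x] :=
    haxp.mem_affineSpan_of_mem_of_ne (by simp) (by simp) (by simp) hpx
  have hle : line[k, p, x] ≤ line[k, p, q] :=
    affineSpan_pair_le_of_mem_of_mem (left_mem_affineSpan_pair k p q) hx
  exact hcol (collinear_insert_of_mem_affineSpan_pair (hle ha))

section StrictConvexSpace

variable {V P : Type*} [NormedAddCommGroup V] [NormedSpace ℝ V] [StrictConvexSpace ℝ V]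
  [MetricSpace P] [NormedAddTorsor V P] {a c p q x : P}

theorem dist_add_dist_lt_dist_add_dist_of_wbtw (hac : Wbtw ℝ a x c) (hpq : Wbtw ℝ p x q)
    (hap : ¬ Wbtw ℝ a x p) :
    dist c q + dist a p < dist a c + dist p q := by
  calc
    dist c q + dist a p < (dist c x + dist x q) + (dist a x + dist x p) :=
      add_lt_add_of_le_of_lt (dist_triangle c x q) (dist_lt_dist_add_dist_iff.2 hap)
    _ = (dist a x + dist x c) + (dist p x + dist x q) := by
      rw [dist_comm c x, dist_comm x p]
      ring
    _ = dist a c + dist p q := by rw [hac.dist_add_dist, hpq.dist_add_dist]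

theorem crossing_distance_estimate_general (hac : Wbtw ℝ a x c) (hpq : Wbtw ℝ p x q)
    (hap : ¬ Wbtw ℝ a x p) (hle : dist p q ≤ dist a p) :
    dist c q < dist a c := by
  linarith [dist_add_dist_lt_dist_add_dist_of_wbtw hac hpq hap]

end StrictConvexSpace

/-- Final distance estimate in case 2 of Lemma 3: if the segment `ac`
crosses the segment `pq`, `a, p, q` are not collinear, and
`dist p q ≤ dist a p`, then `dist c q < dist a c`. -/
theorem crossing_distance_estimate
    (a c p q : EuclideanSpace ℝ (Fin 2))
    (x : EuclideanSpace ℝ (Fin 2))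
    (hx_ac : x ∈ openSegment ℝ a c)
    (hx_pq : x ∈ openSegment ℝ p q)
    (hcol : ¬ Collinear ℝ ({a, p, q} : Set (EuclideanSpace ℝ (Fin 2))))
    (hle : dist p q ≤ dist a p) :
    dist c q < dist a c := by
  have hac : Wbtw ℝ a x c := mem_segment_iff_wbtw.1 (openSegment_subset_segment ℝ a c hx_ac)
  have hpq : Sbtw ℝ p x q := sbtw_of_mem_openSegment hx_pq (ne₂₃_of_not_collinear hcol)
  exact crossing_distance_estimate_general hac hpq.wbtw (mt Wbtw.collinear
    (not_collinear_of_mem_affineSpan_pair hpq.wbtw.mem_affineSpan hpq.left_ne hcol)) hle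
end

section
/- Let E be the Euclidean plane (EuclideanSpace ℝ (Fin 2)). Let a, b, c ∈ E be non-collinear, let x be a point of the open segment between a and b, and let p ∈ E be such that p and c are strictly on the same side of the affine line through a and b (AffineSubspace.SSameSide of the affine span of {a,b}) and p ∉ convexHull ℝ {a,b,c}. Then the segment from x to p meets the union of the segment from a to c and the segment from b to c; i.e., there exists y ∈ segment ℝ x p with y ∈ segment ℝ a c ∪ segment ℝ b c. -/
/-! In barycentric coordinates with respect to `a`, `b`, `c`, the segment from `x` to `p` starts
with all coordinates nonnegative and ends with a negative `a`- or `b`-coordinate, the `c`-coordinate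
being nonnegative at both ends. If the `a`-coordinate is the first of the two to vanish, then the
other two coordinates are still nonnegative at that moment, so the point reached lies on the side
`bc`. With coordinates `(u, v, w)` of `x` and `(α, β, γ)` of `p`, which of the two vanishes first is
decided by comparing `v * α` with `u * β`. -/

section Triangle

variable {𝕜 E : Type*} [Field 𝕜] [LinearOrder 𝕜] [IsStrictOrderedRing 𝕜]
  [AddCommGroup E] [Module 𝕜 E]

theorem mem_convexHull_triple_iff {a b c x : E} :
    x ∈ convexHull 𝕜 {a, b, c} ↔
      ∃ u v w : 𝕜, 0 ≤ u ∧ 0 ≤ v ∧ 0 ≤ w ∧ u + v + w = 1 ∧ u • a + v • b + w • c = x := by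
  constructor
  · rw [convexHull_insert (Set.insert_nonempty _ _), convexHull_pair, convexJoin_singleton_left]
    simp only [Set.mem_iUnion]
    rintro ⟨_, ⟨r, s, hr, hs, hrs, rfl⟩, u, t, hu, ht, hut, rfl⟩
    refine ⟨u, t * r, t * s, hu, mul_nonneg ht hr, mul_nonneg ht hs, ?_, by module⟩
    rw [add_assoc, ← mul_add, hrs, mul_one, hut]
  · rintro ⟨u, v, w, hu, hv, hw, hsum, rfl⟩
    refine mem_convexHull_of_exists_fintype ![u, v, w] ![a, b, c] ?_ ?_ ?_ ?_
    · simp [Fin.forall_fin_succ, hu, hv, hw]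
    · simpa [Fin.sum_univ_three] using hsum
    · simp [Fin.forall_fin_succ]
    · simp [Fin.sum_univ_three]

theorem exists_barycentric_nonneg_of_wSameSide {a b c p : E} (hc : c ∉ line[𝕜, a, b])
    (hside : line[𝕜, a, b].WSameSide p c) :
    ∃ α β γ : 𝕜, 0 ≤ γ ∧ α + β + γ = 1 ∧ α • a + β • b + γ • c = p := by
  have hp : p ∈ {y | line[𝕜, a, b].WSameSide c y} := hside.symm
  rw [AffineSubspace.setOfPred_wSameSide_eq_image2 hc (left_mem_affineSpan_pair 𝕜 a b)] at hp
  obtain ⟨γ, hγ, q, hq, rfl⟩ := hp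
  obtain ⟨s, rfl⟩ := mem_affineSpan_pair_iff_exists_lineMap_eq.1 hq
  refine ⟨1 - s - γ, s, γ, hγ, by ring, ?_⟩
  simp only [AffineMap.lineMap_apply_module, vsub_eq_sub, vadd_eq_add]
  module

theorem exists_mem_segment_opposite_of_coord_neg (a b c : E) {u v w α β γ : 𝕜}
    (hx : u + v + w = 1) (hp : α + β + γ = 1) (hu : 0 ≤ u) (hα : α < 0)
    (hβ : v * α ≤ u * β) (hγ : w * α ≤ u * γ) :
    ∃ y ∈ segment 𝕜 (u • a + v • b + w • c) (α • a + β • b + γ • c), y ∈ segment 𝕜 b c := by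
  have hd : 0 < u - α := by linarith
  -- The `a`-coordinate `(1 - t) * u + t * α` of the moving point vanishes at `t = u / (u - α)`.
  refine ⟨((u * β - v * α) / (u - α)) • b + ((u * γ - w * α) / (u - α)) • c,
    ⟨-α / (u - α), u / (u - α), div_nonneg (by linarith) hd.le, div_nonneg hu hd.le, ?_, ?_⟩,
    ⟨_, _, div_nonneg (sub_nonneg.2 hβ) hd.le, div_nonneg (sub_nonneg.2 hγ) hd.le, ?_, rfl⟩⟩
  · field_simp
    ring
  · match_scalars <;> field_simp <;> ring
  · field_simp
    linear_combination u * hp - α * hx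

theorem exists_mem_segment_opposite_of_notMem_convexHull {a b c : E} {u v w α β γ : 𝕜}
    (hx : u + v + w = 1) (hu : 0 ≤ u) (hv : 0 ≤ v) (hw : 0 ≤ w)
    (hp : α + β + γ = 1) (hγ : 0 ≤ γ) (hαβ : v * α ≤ u * β)
    (hout : α • a + β • b + γ • c ∉ convexHull 𝕜 {a, b, c}) :
    ∃ y ∈ segment 𝕜 (u • a + v • b + w • c) (α • a + β • b + γ • c), y ∈ segment 𝕜 b c := by
  rcases hu.eq_or_lt with rfl | hu
  · exact ⟨_, left_mem_segment 𝕜 _ _, v, w, hv, hw, by simpa using hx, by simp⟩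
  have hα : α < 0 := by
    by_contra! hα
    have hβ : 0 ≤ β := nonneg_of_mul_nonneg_right ((mul_nonneg hv hα).trans hαβ) hu
    exact hout (mem_convexHull_triple_iff.2 ⟨α, β, γ, hα, hβ, hγ, hp, rfl⟩)
  have hwγ : w * α ≤ u * γ :=
    (mul_nonpos_of_nonneg_of_nonpos hw hα.le).trans (mul_nonneg hu.le hγ)
  exact exists_mem_segment_opposite_of_coord_neg a b c hx hp hu.le hα hαβ hwγ

theorem segment_from_base_to_outside_crosses_general {a b c p x : E}
    (hx : x ∈ convexHull 𝕜 {a, b, c}) (hc : c ∉ line[𝕜, a, b])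
    (hside : line[𝕜, a, b].WSameSide p c) (hp : p ∉ convexHull 𝕜 {a, b, c}) :
    ∃ y ∈ segment 𝕜 x p, y ∈ segment 𝕜 a c ∪ segment 𝕜 b c := by
  obtain ⟨u, v, w, hu, hv, hw, huvw, rfl⟩ := mem_convexHull_triple_iff.1 hx
  obtain ⟨α, β, γ, hγ, hαβγ, rfl⟩ := exists_barycentric_nonneg_of_wSameSide hc hside
  rcases le_total (v * α) (u * β) with h | h
  · obtain ⟨y, hy, hybc⟩ :=
      exists_mem_segment_opposite_of_notMem_convexHull huvw hu hv hw hαβγ hγ h hp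
    exact ⟨y, hy, Or.inr hybc⟩
  · rw [add_comm u] at huvw
    rw [add_comm α] at hαβγ
    rw [add_comm (α • a), Set.insert_comm] at hp
    obtain ⟨y, hy, hyac⟩ :=
      exists_mem_segment_opposite_of_notMem_convexHull huvw hv hu hw hαβγ hγ h hp
    rw [add_comm (v • b), add_comm (β • b)] at hy
    exact ⟨y, hy, Or.inl hyac⟩

end Triangle

/-- If `p` lies outside the triangle `abc` and strictly on the same side of
the line `(a,b)` as `c`, then any segment from an interior point `x` of the
side `ab` to `p` must cross the side `ac` or the side `bc`. -/
theorem segment_from_base_to_outside_crosses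
    (a b c p x : EuclideanSpace ℝ (Fin 2))
    (hcol : ¬ Collinear ℝ ({a, b, c} : Set (EuclideanSpace ℝ (Fin 2))))
    (hx : x ∈ openSegment ℝ a b)
    (hside : AffineSubspace.SSameSide
      (affineSpan ℝ ({a, b} : Set (EuclideanSpace ℝ (Fin 2)))) p c)
    (hp : p ∉ convexHull ℝ ({a, b, c} : Set (EuclideanSpace ℝ (Fin 2)))) :
    ∃ y ∈ segment ℝ x p, y ∈ segment ℝ a c ∪ segment ℝ b c :=
  have hx_triangle : x ∈ convexHull ℝ {a, b, c} :=
    segment_subset_convexHull (by simp) (by simp) (openSegment_subset_segment ℝ a b hx)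
  segment_from_base_to_outside_crosses_general hx_triangle hside.right_notMem hside.wSameSide hp
end
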